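/- arXiv:2310.08816 — 2 statements merged into one kernel-verified Lean document; each statement's English description precedes it below -/
import Mathlib

section
/- For every W ∈ X, the imaginary part of B(W,W) equals −∫_{|ξ|<k} ( √(k²−|ξ|²) |a₁(ξ)|² + (k²/√(k²−|ξ|²)) |a₂(ξ)|² ) dξ. Consequently, if Im B(W,W) = 0 then Ŵ(ξ) = 0 for every ξ with |ξ| < k. -/
noncomputable section

open MeasureTheory Complex Filter Topology
open scoped Real NNReal ContDiff

/-- The plane `ℝ²`. -/
abbrev R2 : Type := EuclideanSpace ℝ (Fin 2)

/-- Euclidean dot product on `ℝ²`. -/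
def rdot (x ξ : R2) : ℝ := x 0 * ξ 0 + x 1 * ξ 1

/-- `testFT φ ξ = ∫ e^{i x·ξ} φ(x) dx`, the (inverse-type) Fourier integral of a
test function `φ`. -/
def testFT (φ : R2 → ℂ) (ξ : R2) : ℂ :=
  ∫ x : R2, Complex.exp (Complex.I * (rdot x ξ : ℂ)) * φ x

/-- The squared `H^s(ℝ²)` norm of the distribution whose Fourier transform is `F`:
`‖f‖² = (2π)⁻² ∫ (1+|ξ|²)^s |f̂(ξ)|² dξ`. -/
def wnormSq (s : ℝ) (F : R2 → ℂ) : ℝ :=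
  ((2 * π) ^ 2)⁻¹ * ∫ ξ : R2, ((1 : ℝ) + ‖ξ‖ ^ 2) ^ s * ‖F ξ‖ ^ 2

/-- The `H^s(ℝ²)` norm (Fourier-side representation). -/
def wnorm (s : ℝ) (F : R2 → ℂ) : ℝ := Real.sqrt (wnormSq s F)

/-- `F` is the Fourier transform of an element of `H^s(ℝ²)`. -/
def MemHs (s : ℝ) (F : R2 → ℂ) : Prop :=
  AEStronglyMeasurable F (volume : Measure R2) ∧
    Integrable (fun ξ : R2 => ((1 : ℝ) + ‖ξ‖ ^ 2) ^ s * ‖F ξ‖ ^ 2) volume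

/-- An element `f` of `H̃^s(Γ)`: a distribution on `ℝ²` of Sobolev regularity `s`
supported in the closure of `Γ`, represented by its Fourier transform `ft`
(a continuous function, `f` being a compactly supported distribution).
The support condition is expressed by testing against smooth compactly supported
functions `φ` whose support avoids `closure Γ`, via the Parseval pairing
`∫ f φ dx = (2π)⁻² ∫ f̂(ξ) φ̌(ξ) dξ` with `φ̌(ξ) = ∫ e^{ix·ξ} φ(x) dx`. -/
structure HTildeElt (s : ℝ) (Γ : Set R2) where
  ft : R2 → ℂ
  cont : Continuous ft
  mem : Integrable (fun ξ : R2 => ((1 : ℝ) + ‖ξ‖ ^ 2) ^ s * ‖ft ξ‖ ^ 2) volume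
  supp : ∀ φ : R2 → ℂ, ContDiff ℝ ∞ φ → HasCompactSupport φ →
    tsupport φ ∩ closure Γ = ∅ → (∫ ξ : R2, ft ξ * testFT φ ξ) = 0

/-- `Γ` is a bounded Lipschitz domain in `ℝ²`: a nonempty bounded open set whose
boundary is locally, after a rigid motion, the graph of a Lipschitz function with
the domain on one side. -/
def IsLipschitzDomain (Γ : Set R2) : Prop :=
  IsOpen Γ ∧ Bornology.IsBounded Γ ∧ Γ.Nonempty ∧
    ∀ x ∈ frontier Γ, ∃ (e : R2 ≃ₗᵢ[ℝ] R2) (L : ℝ≥0) (f : ℝ → ℝ) (U : Set R2),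
      LipschitzWith L f ∧ IsOpen U ∧ x ∈ U ∧
        ∀ y ∈ U, (y ∈ Γ ↔ f (e y 0) < e y 1)

/-- `ξ·V̂(ξ)`, i.e. `-i` times the Fourier transform of `div V`. -/
def dotFt (F1 F2 : R2 → ℂ) (ξ : R2) : ℂ := (ξ 0 : ℂ) * F1 ξ + (ξ 1 : ℂ) * F2 ξ

/-- `ξ⊥·V̂(ξ)`, i.e. `-i` times the Fourier transform of `curl V`. -/
def curlFt (F1 F2 : R2 → ℂ) (ξ : R2) : ℂ := (ξ 1 : ℂ) * F1 ξ - (ξ 0 : ℂ) * F2 ξ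

/-- An element of `X = H̃^{-1/2}_div(Γ)`: a pair of elements of `H̃^{-1/2}(Γ)`
whose distributional divergence also belongs to `H̃^{-1/2}(Γ)`. -/
structure Xelt (Γ : Set R2) where
  c1 : HTildeElt (-(1/2) : ℝ) Γ
  c2 : HTildeElt (-(1/2) : ℝ) Γ
  divMem : Integrable (fun ξ : R2 =>
    ((1 : ℝ) + ‖ξ‖ ^ 2) ^ (-(1/2) : ℝ) * ‖dotFt c1.ft c2.ft ξ‖ ^ 2) volume

/-- The Fourier transform of `div V`. -/
def divFt {Γ : Set R2} (V : Xelt Γ) (ξ : R2) : ℂ :=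
  Complex.I * dotFt V.c1.ft V.c2.ft ξ

/-- The squared `H`-norm `‖V‖²_H` of a vector field. -/
def HnormSq {Γ : Set R2} (V : Xelt Γ) : ℝ :=
  wnormSq (-(1/2)) V.c1.ft + wnormSq (-(1/2)) V.c2.ft

/-- The squared `X`-norm `‖V‖²_X = ‖V‖²_H + ‖div V‖²_{H̃^{-1/2}}`. -/
def XnormSq {Γ : Set R2} (V : Xelt Γ) : ℝ :=
  HnormSq V + wnormSq (-(1/2)) (divFt V)

/-- The `X`-norm. -/
def Xnorm {Γ : Set R2} (V : Xelt Γ) : ℝ := Real.sqrt (XnormSq V)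

/-- `ĝ₀(ξ) = i/√(k²-|ξ|²)`, with the branch `√(k²-|ξ|²) = i√(|ξ|²-k²)` for `|ξ| > k`. -/
def g0hat (k : ℝ) (ξ : R2) : ℂ :=
  if ‖ξ‖ < k then Complex.I / ((Real.sqrt (k ^ 2 - ‖ξ‖ ^ 2) : ℝ) : ℂ)
  else 1 / ((Real.sqrt (‖ξ‖ ^ 2 - k ^ 2) : ℝ) : ℂ)

/-- The integrand of the sesquilinear form `B`:
`ĝ₀(ξ) [ (|ξ|²-k²) a₁ b̄₁ - k² a₂ b̄₂ ]` with `a₁ = ξ·Ŵ/|ξ|`, `a₂ = ξ⊥·Ŵ/|ξ|`, etc. -/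
def Bintegrand (k : ℝ) (F1 F2 G1 G2 : R2 → ℂ) (ξ : R2) : ℂ :=
  g0hat k ξ *
    (((‖ξ‖ ^ 2 - k ^ 2 : ℝ) : ℂ) * (dotFt F1 F2 ξ * starRingEnd ℂ (dotFt G1 G2 ξ)) -
      ((k ^ 2 : ℝ) : ℂ) * (curlFt F1 F2 ξ * starRingEnd ℂ (curlFt G1 G2 ξ))) /
    ((‖ξ‖ ^ 2 : ℝ) : ℂ)

/-- The sesquilinear form `B(W,V)`. -/
def Bform (k : ℝ) {Γ : Set R2} (W V : Xelt Γ) : ℂ :=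
  ∫ ξ : R2, Bintegrand k W.c1.ft W.c2.ft V.c1.ft V.c2.ft ξ

/-- The sesquilinear form `E(q,V) = B(curl⃗ q, V)`, where
`curl⃗ q = (∂q/∂x₂, -∂q/∂x₁)` has Fourier transform `(iξ₂ q̂, -iξ₁ q̂)`. -/
def Eform (k : ℝ) {Γ : Set R2} (q : HTildeElt (1/2 : ℝ) Γ) (V : Xelt Γ) : ℂ :=
  ∫ ξ : R2, Bintegrand k (fun η => Complex.I * (η 1 : ℂ) * q.ft η)
      (fun η => -(Complex.I * (η 0 : ℂ) * q.ft η)) V.c1.ft V.c2.ft ξ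

/-- The inner product of the Hilbert space `X`; by the Riesz representation
theorem, every bounded conjugate-linear functional on `X` is `V ↦ Xinner Y V`
for a unique `Y ∈ X`, with functional norm `Xnorm Y`. -/
def Xinner {Γ : Set R2} (Y V : Xelt Γ) : ℂ :=
  ((((2 * π) ^ 2)⁻¹ : ℝ) : ℂ) * ∫ ξ : R2, ((((1 : ℝ) + ‖ξ‖ ^ 2) ^ (-(1/2) : ℝ) : ℝ) : ℂ) *
    (Y.c1.ft ξ * starRingEnd ℂ (V.c1.ft ξ) + Y.c2.ft ξ * starRingEnd ℂ (V.c2.ft ξ) +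
      divFt Y ξ * starRingEnd ℂ (divFt V ξ))

/-- `√(k²-|ξ|²)`, with the branch `i√(|ξ|²-k²)` for `|ξ| > k`. -/
def rootk (k : ℝ) (ξ : R2) : ℂ :=
  if ‖ξ‖ < k then ((Real.sqrt (k ^ 2 - ‖ξ‖ ^ 2) : ℝ) : ℂ)
  else Complex.I * ((Real.sqrt (‖ξ‖ ^ 2 - k ^ 2) : ℝ) : ℂ)

/-- The Fourier multiplier `i/(2√(k²-|ξ|²))` of the Helmholtz single-layer
operator `T` with kernel `e^{ik|x-y|}/(4π|x-y|)`. -/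
def mT (k : ℝ) (ξ : R2) : ℂ := Complex.I / (2 * rootk k ξ)

/-- The Fourier multiplier `1/(2|ξ|)` of the Laplace single-layer operator `T₀`
with kernel `1/(4π|x-y|)`. -/
def mT0 (ξ : R2) : ℂ := 1 / (2 * ((‖ξ‖ : ℝ) : ℂ))

/-- The Fourier multiplier of `R = T - T₀`. -/
def mR (k : ℝ) (ξ : R2) : ℂ := mT k ξ - mT0 ξ

/-- The distributions with Fourier data `G` and `E` have the same restriction to
the open set `Γ`: `⟨G - E, φ⟩ = 0` for all smooth `φ` compactly supported in `Γ`
(pairing written on the Fourier side). -/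
def AgreeOn (Γ : Set R2) (G E : R2 → ℂ) : Prop :=
  ∀ φ : R2 → ℂ, ContDiff ℝ ∞ φ → HasCompactSupport φ → tsupport φ ⊆ Γ →
    (∫ ξ : R2, (G ξ - E ξ) * testFT φ ξ) = 0

/-- The duality pairing `⟨f, ψ⟩` between `H^{1/2}(Γ)` and `H̃^{-1/2}(Γ)`, written
on the Fourier side (Plancherel): `(2π)⁻² ∫ f̂(ξ) conj(ψ̂(ξ)) dξ`, where `G = f̂`
is the Fourier data of (an extension of) `f`. -/
def dualPair (G ψ : R2 → ℂ) : ℂ :=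
  ((((2 * π) ^ 2)⁻¹ : ℝ) : ℂ) * ∫ ξ : R2, G ξ * starRingEnd ℂ (ψ ξ)

/-!
The symbol `ĝ₀` is purely imaginary on the propagating disc `|ξ| < k` and real on the evanescent
region `|ξ| > k`, so only the disc contributes to `Im B(W,W)`, with an integrand of constant sign.
If `Im B(W,W)` vanishes, so does this integrand almost everywhere on the disc; hence
`|Ŵ|² = |a₁|² + |a₂|²` does, and `Ŵ`, being continuous, is zero on the whole disc.

Taking imaginary parts under the integral requires `B(W,W)` to converge absolutely. For `|ξ| ≤ 2k`
the singularity of `ĝ₀` at `|ξ| = k` behaves like `||ξ| - k|^{-1/2}`, which is locally integrable,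
and `Ŵ` is bounded. For `|ξ| ≥ 2k`, `ĝ₀` is comparable to `(1 + |ξ|²)^{-1/2}` and the integrand is
controlled by the squared norm of `W` in `X`.
-/

section LocalIntegrability

lemma locallyIntegrable_abs_sub_rpow (a : ℝ) {r : ℝ} (hr : -1 < r) :
    LocallyIntegrable (fun x : ℝ => |x - a| ^ r) := by
  have centered : LocallyIntegrable (fun x : ℝ => |x| ^ r) := by
    refine locallyIntegrable_of_norm_le_rpow (C := 1) (α := -r) (by simp)
      (by simpa using neg_lt.2 hr) (Eventually.of_forall fun x => ?_)
      (Measurable.aestronglyMeasurable (by fun_prop))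
    rw [neg_neg, one_mul, Real.norm_eq_abs, Real.norm_eq_abs, abs_of_nonneg (by positivity)]
  rw [← map_sub_right_eq_self volume a] at centered
  exact (locallyIntegrable_map_homeomorph (Homeomorph.subRight a)).1 centered

lemma locallyIntegrable_comp_norm {E F : Type*} [NormedAddCommGroup E] [NormedSpace ℝ E]
    [FiniteDimensional ℝ E] [Nontrivial E] [MeasurableSpace E] [BorelSpace E]
    (μ : Measure E) [μ.IsAddHaarMeasure] [NormedAddCommGroup F] [NormedSpace ℝ F] {φ : ℝ → F}
    (hφ : LocallyIntegrableOn φ (Set.Ici 0)) :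
    LocallyIntegrable (fun x : E => φ ‖x‖) μ := by
  have integrableOn_ball (R : ℝ) :
      IntegrableOn (fun x : E => φ ‖x‖) (Metric.ball 0 R) μ := by
    have on_Icc : IntegrableOn φ (Set.Icc 0 R) :=
      hφ.integrableOn_compact_subset Set.Icc_subset_Ici_self isCompact_Icc
    rw [integrableOn_fun_norm_addHaar]
    exact (on_Icc.continuousOn_smul (by fun_prop) isCompact_Icc).mono_set Set.Ioo_subset_Icc_self
  exact fun x => ⟨_, Metric.isOpen_ball.mem_nhds (by simp), integrableOn_ball (‖x‖ + 1)⟩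

lemma locallyIntegrableOn_inv_sqrt_abs_sq_sub_sq {k : ℝ} (hk : 0 < k) :
    LocallyIntegrableOn (fun y : ℝ => (√|y ^ 2 - k ^ 2|)⁻¹) (Set.Ici 0) := by
  have singular : LocallyIntegrableOn (fun y : ℝ => |y - k| ^ (-(1 / 2) : ℝ)) (Set.Ici 0) :=
    (locallyIntegrable_abs_sub_rpow k (by norm_num)).locallyIntegrableOn _
  have regular : ContinuousOn (fun y : ℝ => (√(y + k))⁻¹) (Set.Ici 0) :=
    ContinuousOn.inv₀ (by fun_prop) fun y (hy : 0 ≤ y) => by positivity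
  refine (singular.mul_continuousOn regular isClosed_Ici.isLocallyClosed).congr ?_
  filter_upwards [ae_restrict_mem measurableSet_Ici] with y (hy : 0 ≤ y)
  have factor : |y ^ 2 - k ^ 2| = |y - k| * (y + k) := by
    rw [sq_sub_sq, abs_mul, abs_of_nonneg (by positivity), mul_comm]
  rw [factor, Real.sqrt_mul (abs_nonneg _), mul_inv, Real.sqrt_eq_rpow |y - k|,
    Real.rpow_neg (abs_nonneg _)]

end LocalIntegrability

section FundamentalSolution

variable {k : ℝ}

lemma norm_g0hat (hk : 0 ≤ k) (ξ : R2) : ‖g0hat k ξ‖ = (√|‖ξ‖ ^ 2 - k ^ 2|)⁻¹ := by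
  rw [g0hat]
  split_ifs with hξ
  · have : ‖ξ‖ ^ 2 ≤ k ^ 2 := by gcongr
    rw [norm_div, norm_I, norm_real, Real.norm_of_nonneg (Real.sqrt_nonneg _), abs_sub_comm,
      abs_of_nonneg (sub_nonneg.2 this), one_div]
  · have : k ^ 2 ≤ ‖ξ‖ ^ 2 := by gcongr; exact not_lt.1 hξ
    rw [norm_div, norm_one, norm_real, Real.norm_of_nonneg (Real.sqrt_nonneg _),
      abs_of_nonneg (sub_nonneg.2 this), one_div]

lemma measurable_g0hat : Measurable (g0hat k) := by
  refine Measurable.ite (measurableSet_lt measurable_norm measurable_const) ?_ ?_ <;> fun_prop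

lemma locallyIntegrable_g0hat (hk : 0 < k) : LocallyIntegrable (g0hat k) := by
  refine (locallyIntegrable_comp_norm volume
    (locallyIntegrableOn_inv_sqrt_abs_sq_sub_sq hk)).mono
    measurable_g0hat.aestronglyMeasurable (Eventually.of_forall fun ξ => ?_)
  rw [norm_g0hat hk.le, Real.norm_of_nonneg (by positivity)]

lemma norm_g0hat_le_of_two_mul_le (hk : 0 < k) {ξ : R2} (hξ : 2 * k ≤ ‖ξ‖) :
    ‖g0hat k ξ‖ ≤
      √((1 + 4 * k ^ 2) / (3 * k ^ 2)) * (1 + ‖ξ‖ ^ 2) ^ (-(1 / 2) : ℝ) := by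
  have sq_le : (2 * k) ^ 2 ≤ ‖ξ‖ ^ 2 := by gcongr
  have gap_pos : 0 < ‖ξ‖ ^ 2 - k ^ 2 := by nlinarith
  have weight_eq : (1 + ‖ξ‖ ^ 2) ^ (-(1 / 2) : ℝ) = √((1 + ‖ξ‖ ^ 2)⁻¹) := by
    rw [Real.rpow_neg (by positivity), ← Real.sqrt_eq_rpow, Real.sqrt_inv]
  rw [norm_g0hat hk.le, abs_of_pos gap_pos, weight_eq, ← Real.sqrt_mul (by positivity),
    ← Real.sqrt_inv]
  gcongr
  -- `(|ξ|² - k²) / (1 + |ξ|²)` increases with `|ξ|`, from the value `3k² / (1 + 4k²)` at `2k`.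
  rw [← div_eq_mul_inv, div_div, inv_eq_one_div, div_le_div_iff₀ gap_pos (by positivity)]
  nlinarith

end FundamentalSolution

section Integrand

variable {k : ℝ} (F₁ F₂ : R2 → ℂ) {ξ : R2}

lemma norm_sq_dotFt_add_norm_sq_curlFt (ξ : R2) :
    ‖dotFt F₁ F₂ ξ‖ ^ 2 + ‖curlFt F₁ F₂ ξ‖ ^ 2 =
      ‖ξ‖ ^ 2 * (‖F₁ ξ‖ ^ 2 + ‖F₂ ξ‖ ^ 2) := by
  rw [EuclideanSpace.norm_sq_eq, Fin.sum_univ_two]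
  simp only [dotFt, curlFt, ← normSq_eq_norm_sq, normSq_apply, Real.norm_eq_abs, sq_abs,
    add_re, add_im, sub_re, sub_im, re_ofReal_mul, im_ofReal_mul]
  ring

lemma Bintegrand_self (k : ℝ) (ξ : R2) :
    Bintegrand k F₁ F₂ F₁ F₂ ξ = g0hat k ξ *
      ((((‖ξ‖ ^ 2 - k ^ 2) * ‖dotFt F₁ F₂ ξ‖ ^ 2 - k ^ 2 * ‖curlFt F₁ F₂ ξ‖ ^ 2) /
        ‖ξ‖ ^ 2 : ℝ) : ℂ) := by
  rw [Bintegrand, mul_conj, mul_conj, normSq_eq_norm_sq, normSq_eq_norm_sq, mul_div_assoc]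
  norm_cast

lemma norm_Bintegrand_self_le (k : ℝ) (ξ : R2) :
    ‖Bintegrand k F₁ F₂ F₁ F₂ ξ‖ ≤ ‖g0hat k ξ‖ *
      ((|‖ξ‖ ^ 2 - k ^ 2| * ‖dotFt F₁ F₂ ξ‖ ^ 2 + k ^ 2 * ‖curlFt F₁ F₂ ξ‖ ^ 2) /
        ‖ξ‖ ^ 2) := by
  rw [Bintegrand_self, norm_mul, norm_real, norm_div, Real.norm_of_nonneg (sq_nonneg ‖ξ‖)]
  gcongr
  refine (norm_sub_le _ _).trans_eq ?_
  rw [norm_mul, Real.norm_eq_abs, Real.norm_of_nonneg (by positivity),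
    Real.norm_of_nonneg (by positivity)]

lemma norm_Bintegrand_self_le_of_le_two_mul (hξ : ‖ξ‖ ≤ 2 * k) :
    ‖Bintegrand k F₁ F₂ F₁ F₂ ξ‖ ≤
      ‖g0hat k ξ‖ * (3 * k ^ 2 * (‖F₁ ξ‖ ^ 2 + ‖F₂ ξ‖ ^ 2)) := by
  have gap_le : |‖ξ‖ ^ 2 - k ^ 2| ≤ 3 * k ^ 2 := by
    rw [abs_le]; constructor <;> nlinarith [norm_nonneg ξ]
  have curl_le : k ^ 2 * ‖curlFt F₁ F₂ ξ‖ ^ 2 ≤ 3 * k ^ 2 * ‖curlFt F₁ F₂ ξ‖ ^ 2 := by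
    gcongr; nlinarith
  refine (norm_Bintegrand_self_le F₁ F₂ k ξ).trans ?_
  gcongr
  refine div_le_of_le_mul₀ (by positivity) (by positivity) ?_
  calc |‖ξ‖ ^ 2 - k ^ 2| * ‖dotFt F₁ F₂ ξ‖ ^ 2 + k ^ 2 * ‖curlFt F₁ F₂ ξ‖ ^ 2
      ≤ 3 * k ^ 2 * ‖dotFt F₁ F₂ ξ‖ ^ 2 + 3 * k ^ 2 * ‖curlFt F₁ F₂ ξ‖ ^ 2 := by gcongr
    _ = 3 * k ^ 2 * (‖F₁ ξ‖ ^ 2 + ‖F₂ ξ‖ ^ 2) * ‖ξ‖ ^ 2 := by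
      rw [← mul_add, norm_sq_dotFt_add_norm_sq_curlFt]; ring

lemma norm_Bintegrand_self_le_of_le_norm (hk : 0 ≤ k) (hξ : k ≤ ‖ξ‖) :
    ‖Bintegrand k F₁ F₂ F₁ F₂ ξ‖ ≤
      ‖g0hat k ξ‖ * (‖dotFt F₁ F₂ ξ‖ ^ 2 + k ^ 2 * (‖F₁ ξ‖ ^ 2 + ‖F₂ ξ‖ ^ 2)) := by
  have gap_le : |‖ξ‖ ^ 2 - k ^ 2| ≤ ‖ξ‖ ^ 2 := by
    rw [abs_of_nonneg (by nlinarith)]; nlinarith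
  have curl_le : ‖curlFt F₁ F₂ ξ‖ ^ 2 ≤ ‖ξ‖ ^ 2 * (‖F₁ ξ‖ ^ 2 + ‖F₂ ξ‖ ^ 2) := by
    rw [← norm_sq_dotFt_add_norm_sq_curlFt]
    exact le_add_of_nonneg_left (by positivity)
  refine (norm_Bintegrand_self_le F₁ F₂ k ξ).trans ?_
  gcongr
  refine div_le_of_le_mul₀ (by positivity) (by positivity) ?_
  calc |‖ξ‖ ^ 2 - k ^ 2| * ‖dotFt F₁ F₂ ξ‖ ^ 2 + k ^ 2 * ‖curlFt F₁ F₂ ξ‖ ^ 2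
      ≤ ‖ξ‖ ^ 2 * ‖dotFt F₁ F₂ ξ‖ ^ 2 +
          k ^ 2 * (‖ξ‖ ^ 2 * (‖F₁ ξ‖ ^ 2 + ‖F₂ ξ‖ ^ 2)) := by gcongr
    _ = (‖dotFt F₁ F₂ ξ‖ ^ 2 + k ^ 2 * (‖F₁ ξ‖ ^ 2 + ‖F₂ ξ‖ ^ 2)) * ‖ξ‖ ^ 2 := by ring

variable {F₁ F₂}

lemma measurable_Bintegrand {G₁ G₂ : R2 → ℂ} (hF₁ : Measurable F₁) (hF₂ : Measurable F₂)
    (hG₁ : Measurable G₁) (hG₂ : Measurable G₂) : Measurable (Bintegrand k F₁ F₂ G₁ G₂) := by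
  have := measurable_g0hat (k := k)
  have conj_measurable : Measurable (starRingEnd ℂ) := continuous_conj.measurable
  unfold Bintegrand dotFt curlFt
  fun_prop

lemma integrableOn_closedBall_Bintegrand_self (hk : 0 < k) (hF₁ : Continuous F₁)
    (hF₂ : Continuous F₂) :
    IntegrableOn (Bintegrand k F₁ F₂ F₁ F₂) (Metric.closedBall 0 (2 * k)) := by
  have g0hat_int : IntegrableOn (fun ξ => ‖g0hat k ξ‖) (Metric.closedBall 0 (2 * k)) :=
    ((locallyIntegrable_g0hat hk).integrableOn_isCompact (isCompact_closedBall 0 _)).norm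
  have bound_int : IntegrableOn
      (fun ξ => ‖g0hat k ξ‖ * (3 * k ^ 2 * (‖F₁ ξ‖ ^ 2 + ‖F₂ ξ‖ ^ 2)))
      (Metric.closedBall 0 (2 * k)) :=
    g0hat_int.mul_continuousOn (by fun_prop) (isCompact_closedBall 0 _)
  refine bound_int.mono' (measurable_Bintegrand hF₁.measurable hF₂.measurable hF₁.measurable
    hF₂.measurable).aestronglyMeasurable ?_
  filter_upwards [ae_restrict_mem measurableSet_closedBall] with ξ hξ
  exact norm_Bintegrand_self_le_of_le_two_mul F₁ F₂ (mem_closedBall_zero_iff.1 hξ)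

lemma integrableOn_compl_closedBall_Bintegrand_self (hk : 0 < k) (hF₁ : Measurable F₁)
    (hF₂ : Measurable F₂)
    (hF₁_mem : Integrable fun ξ => (1 + ‖ξ‖ ^ 2) ^ (-(1 / 2) : ℝ) * ‖F₁ ξ‖ ^ 2)
    (hF₂_mem : Integrable fun ξ => (1 + ‖ξ‖ ^ 2) ^ (-(1 / 2) : ℝ) * ‖F₂ ξ‖ ^ 2)
    (hdiv_mem : Integrable fun ξ => (1 + ‖ξ‖ ^ 2) ^ (-(1 / 2) : ℝ) * ‖dotFt F₁ F₂ ξ‖ ^ 2) :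
    IntegrableOn (Bintegrand k F₁ F₂ F₁ F₂) (Metric.closedBall 0 (2 * k))ᶜ := by
  have bound_int := (hdiv_mem.add ((hF₁_mem.add hF₂_mem).const_mul (k ^ 2))).const_mul
    (√((1 + 4 * k ^ 2) / (3 * k ^ 2)))
  refine bound_int.integrableOn.mono'
    (measurable_Bintegrand hF₁ hF₂ hF₁ hF₂).aestronglyMeasurable ?_
  filter_upwards [ae_restrict_mem measurableSet_closedBall.compl] with ξ hξ
  have two_mul_lt : 2 * k < ‖ξ‖ := by simpa using hξ
  refine (norm_Bintegrand_self_le_of_le_norm F₁ F₂ hk.le (by linarith)).trans ?_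
  grw [norm_g0hat_le_of_two_mul_le hk two_mul_lt.le]
  exact le_of_eq (by simp only [Pi.add_apply]; ring)

lemma integrable_Bintegrand_self (hk : 0 < k) (hF₁ : Continuous F₁) (hF₂ : Continuous F₂)
    (hF₁_mem : Integrable fun ξ => (1 + ‖ξ‖ ^ 2) ^ (-(1 / 2) : ℝ) * ‖F₁ ξ‖ ^ 2)
    (hF₂_mem : Integrable fun ξ => (1 + ‖ξ‖ ^ 2) ^ (-(1 / 2) : ℝ) * ‖F₂ ξ‖ ^ 2)
    (hdiv_mem : Integrable fun ξ => (1 + ‖ξ‖ ^ 2) ^ (-(1 / 2) : ℝ) * ‖dotFt F₁ F₂ ξ‖ ^ 2) :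
    Integrable (Bintegrand k F₁ F₂ F₁ F₂) := by
  rw [← integrableOn_univ, ← Set.union_compl_self (Metric.closedBall (0 : R2) (2 * k))]
  exact (integrableOn_closedBall_Bintegrand_self hk hF₁ hF₂).union
    (integrableOn_compl_closedBall_Bintegrand_self hk hF₁.measurable hF₂.measurable
      hF₁_mem hF₂_mem hdiv_mem)

end Integrand

section Radiation

variable {k : ℝ} {F₁ F₂ : R2 → ℂ} {ξ : R2}

/-- The power radiated at the propagating frequency `ξ`, `|ξ| < k`, by a field with Fourier
transform `(F₁, F₂)`: the quantity `√(k²-|ξ|²)|a₁|² + (k²/√(k²-|ξ|²))|a₂|²`, with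
`a₁ = ξ·(F₁, F₂)/|ξ|` and `a₂ = ξ⊥·(F₁, F₂)/|ξ|`. The junk values of `√` and `/` make
it vanish at `ξ = 0` and, for `k > 0`, wherever `|ξ| ≥ k`. -/
def radiationDensity (k : ℝ) (F₁ F₂ : R2 → ℂ) (ξ : R2) : ℝ :=
  √(k ^ 2 - ‖ξ‖ ^ 2) * (‖dotFt F₁ F₂ ξ‖ ^ 2 / ‖ξ‖ ^ 2) +
    k ^ 2 / √(k ^ 2 - ‖ξ‖ ^ 2) * (‖curlFt F₁ F₂ ξ‖ ^ 2 / ‖ξ‖ ^ 2)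

lemma radiationDensity_nonneg : 0 ≤ radiationDensity k F₁ F₂ ξ := by
  unfold radiationDensity
  positivity

lemma sqrt_sq_sub_norm_sq_pos (hξ : ‖ξ‖ < k) : 0 < √(k ^ 2 - ‖ξ‖ ^ 2) :=
  Real.sqrt_pos.2 (sub_pos.2 (by gcongr))

lemma eq_zero_of_radiationDensity_eq_zero (hξ : ‖ξ‖ < k) (hξ₀ : ξ ≠ 0)
    (h : radiationDensity k F₁ F₂ ξ = 0) : F₁ ξ = 0 ∧ F₂ ξ = 0 := by
  have norm_pos : 0 < ‖ξ‖ := norm_pos_iff.2 hξ₀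
  have k_pos : 0 < k := norm_pos.trans hξ
  have sqrt_pos := sqrt_sq_sub_norm_sq_pos hξ
  rw [radiationDensity, add_eq_zero_iff_of_nonneg (by positivity) (by positivity)] at h
  have dot_zero : dotFt F₁ F₂ ξ = 0 := by
    simpa [sqrt_pos.ne', hξ₀] using h.1
  have curl_zero : curlFt F₁ F₂ ξ = 0 := by
    simpa [sqrt_pos.ne', k_pos.ne', hξ₀] using h.2
  have energy_zero : ‖F₁ ξ‖ ^ 2 + ‖F₂ ξ‖ ^ 2 = 0 := by
    simpa [dot_zero, curl_zero, hξ₀] using (norm_sq_dotFt_add_norm_sq_curlFt F₁ F₂ ξ).symm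
  rw [add_eq_zero_iff_of_nonneg (by positivity) (by positivity)] at energy_zero
  simpa using energy_zero

lemma im_Bintegrand_self_of_norm_lt (hξ : ‖ξ‖ < k) :
    (Bintegrand k F₁ F₂ F₁ F₂ ξ).im = -radiationDensity k F₁ F₂ ξ := by
  have sqrt_pos := sqrt_sq_sub_norm_sq_pos hξ
  have gap_eq : ‖ξ‖ ^ 2 - k ^ 2 = -√(k ^ 2 - ‖ξ‖ ^ 2) ^ 2 := by
    rw [Real.sq_sqrt (Real.sqrt_pos.1 sqrt_pos).le, neg_sub]
  rw [Bintegrand_self, g0hat, if_pos hξ, im_mul_ofReal, div_ofReal_im, I_im, gap_eq,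
    radiationDensity]
  field_simp
  ring

lemma im_Bintegrand_self_of_le_norm (hξ : k ≤ ‖ξ‖) :
    (Bintegrand k F₁ F₂ F₁ F₂ ξ).im = 0 := by
  rw [Bintegrand_self, g0hat, if_neg hξ.not_gt, im_mul_ofReal, div_ofReal_im, one_im, zero_div,
    zero_mul]

lemma im_Bintegrand_self :
    (fun ξ => (Bintegrand k F₁ F₂ F₁ F₂ ξ).im) =
      {ξ : R2 | ‖ξ‖ < k}.indicator (fun ξ => -radiationDensity k F₁ F₂ ξ) := by
  ext ξ
  by_cases hξ : ‖ξ‖ < k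
  · rw [Set.indicator_of_mem (by exact hξ), im_Bintegrand_self_of_norm_lt hξ]
  · rw [Set.indicator_of_notMem (by exact hξ), im_Bintegrand_self_of_le_norm (not_lt.1 hξ)]

lemma isOpen_setOf_norm_lt {E : Type*} [SeminormedAddGroup E] (r : ℝ) :
    IsOpen {x : E | ‖x‖ < r} :=
  isOpen_lt continuous_norm continuous_const

lemma integrableOn_radiationDensity (hB : Integrable (Bintegrand k F₁ F₂ F₁ F₂)) :
    IntegrableOn (radiationDensity k F₁ F₂) {ξ | ‖ξ‖ < k} := by
  have im_int : Integrable fun ξ => (Bintegrand k F₁ F₂ F₁ F₂ ξ).im := hB.im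
  rw [im_Bintegrand_self, integrable_indicator_iff (isOpen_setOf_norm_lt k).measurableSet] at im_int
  simpa using im_int.neg

lemma im_integral_Bintegrand_self (hB : Integrable (Bintegrand k F₁ F₂ F₁ F₂)) :
    (∫ ξ, Bintegrand k F₁ F₂ F₁ F₂ ξ).im =
      -∫ ξ in {ξ | ‖ξ‖ < k}, radiationDensity k F₁ F₂ ξ :=
  calc (∫ ξ, Bintegrand k F₁ F₂ F₁ F₂ ξ).im
      = ∫ ξ, (Bintegrand k F₁ F₂ F₁ F₂ ξ).im := (integral_im hB).symm
    _ = -∫ ξ in {ξ | ‖ξ‖ < k}, radiationDensity k F₁ F₂ ξ := by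
      rw [im_Bintegrand_self, integral_indicator (isOpen_setOf_norm_lt k).measurableSet,
        integral_neg]

lemma eq_zero_of_setIntegral_radiationDensity_eq_zero
    (hF₁ : Continuous F₁) (hF₂ : Continuous F₂)
    (hint : IntegrableOn (radiationDensity k F₁ F₂) {ξ | ‖ξ‖ < k})
    (h : ∫ ξ in {ξ | ‖ξ‖ < k}, radiationDensity k F₁ F₂ ξ = 0) (hξ : ‖ξ‖ < k) :
    F₁ ξ = 0 ∧ F₂ ξ = 0 := by
  have density_ae : radiationDensity k F₁ F₂ =ᵐ[volume.restrict {ξ | ‖ξ‖ < k}] 0 :=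
    (setIntegral_eq_zero_iff_of_nonneg_ae
      (Eventually.of_forall fun _ => radiationDensity_nonneg) hint).1 h
  have field_ae : (fun ξ => (F₁ ξ, F₂ ξ)) =ᵐ[volume.restrict {ξ | ‖ξ‖ < k}] fun _ => 0 := by
    filter_upwards [density_ae, ae_restrict_mem (isOpen_setOf_norm_lt k).measurableSet,
      ae_restrict_of_ae (Measure.ae_ne volume 0)] with ξ hdensity hlt hne
    exact Prod.ext_iff.2 (eq_zero_of_radiationDensity_eq_zero hlt hne hdensity)
  exact Prod.ext_iff.1 (Measure.eqOn_open_of_ae_eq field_ae (isOpen_setOf_norm_lt k)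
    (by fun_prop) (by fun_prop) hξ)

end Radiation

theorem statement9_general {k : ℝ} (hk : 0 < k) {F₁ F₂ : R2 → ℂ}
    (hF₁ : Continuous F₁) (hF₂ : Continuous F₂)
    (hF₁_mem : Integrable fun ξ => (1 + ‖ξ‖ ^ 2) ^ (-(1 / 2) : ℝ) * ‖F₁ ξ‖ ^ 2)
    (hF₂_mem : Integrable fun ξ => (1 + ‖ξ‖ ^ 2) ^ (-(1 / 2) : ℝ) * ‖F₂ ξ‖ ^ 2)
    (hdiv_mem : Integrable fun ξ => (1 + ‖ξ‖ ^ 2) ^ (-(1 / 2) : ℝ) * ‖dotFt F₁ F₂ ξ‖ ^ 2) :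
    (∫ ξ, Bintegrand k F₁ F₂ F₁ F₂ ξ).im =
        -∫ ξ in {ξ | ‖ξ‖ < k}, radiationDensity k F₁ F₂ ξ ∧
      ((∫ ξ, Bintegrand k F₁ F₂ F₁ F₂ ξ).im = 0 → ∀ ξ, ‖ξ‖ < k → F₁ ξ = 0 ∧ F₂ ξ = 0) := by
  have hB := integrable_Bintegrand_self hk hF₁ hF₂ hF₁_mem hF₂_mem hdiv_mem
  have im_eq := im_integral_Bintegrand_self hB
  refine ⟨im_eq, fun h ξ hξ => ?_⟩
  rw [im_eq, neg_eq_zero] at h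
  exact eq_zero_of_setIntegral_radiationDensity_eq_zero hF₁ hF₂
    (integrableOn_radiationDensity hB) h hξ

/-- for every `W ∈ X`,
`Im B(W,W) = -∫_{|ξ|<k} ( √(k²-|ξ|²)|a₁(ξ)|² + (k²/√(k²-|ξ|²))|a₂(ξ)|² ) dξ`,
with `a₁ = ξ·Ŵ/|ξ|` and `a₂ = ξ⊥·Ŵ/|ξ|`; consequently, if `Im B(W,W) = 0` then
`Ŵ(ξ) = 0` for every `ξ` with `|ξ| < k`. -/
theorem statement9 (Γ : Set R2) (hΓ : IsLipschitzDomain Γ) (k : ℝ) (hk : 0 < k)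
    (W : Xelt Γ) :
    (Bform k W W).im =
      -∫ ξ in {ξ : R2 | ‖ξ‖ < k},
        (Real.sqrt (k ^ 2 - ‖ξ‖ ^ 2) * (‖dotFt W.c1.ft W.c2.ft ξ‖ ^ 2 / ‖ξ‖ ^ 2) +
          k ^ 2 / Real.sqrt (k ^ 2 - ‖ξ‖ ^ 2) * (‖curlFt W.c1.ft W.c2.ft ξ‖ ^ 2 / ‖ξ‖ ^ 2)) ∧
    ((Bform k W W).im = 0 →
      ∀ ξ : R2, ‖ξ‖ < k → W.c1.ft ξ = 0 ∧ W.c2.ft ξ = 0) :=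
  statement9_general hk W.c1.cont W.c2.cont W.c1.mem W.c2.mem W.divMem

end
end

section
/- Let k ∈ ℂ with Im k > 0. For every ξ ∈ ℝ², the two-dimensional Fourier transform of the restriction of the Helmholtz free-space Green's function to the plane satisfies ∫_{ℝ²} e^{-ix·ξ} · e^{ik|x|}/(4π|x|) dx = i / (2 √(k²−|ξ|²)), where the integral converges absolutely and √(k²−|ξ|²) denotes the branch of the square root with positive imaginary part (well defined since k²−|ξ|² is not a nonnegative real number when Im k > 0). -/
noncomputable section

open MeasureTheory Complex Filter Topology
open scoped Real NNReal ContDiff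

/-!
In polar coordinates the Jacobian `r` cancels the singularity `1/|x|`, and the integral of
`e^{ir(k - u·ξ)}/(4π)` along the ray in the direction `u` is `i/(4π(k - u·ξ))`, which leaves the
average of `1/(k - u·ξ)` over the unit circle. With `w² = k² - |ξ|²`, `Im w > 0` and `ζ` the plane
vector `ξ` seen as a complex number, the denominator factors on `|u| = 1` as
`(k + w)/2 · (1 - conj ζ · u/(k + w)) · (1 - ζ u⁻¹/(k + w))`. Since `|ζ| < |k + w|`, the first
parenthesis is invertible inside the disc and Cauchy's formula at the point `ζ/(k + w)` evaluates
the average to `1/w`.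
-/

open Real (circleAverage circleAverage_congr_sphere)

section SquareRoot

lemma exists_sq_eq_im_pos {z : ℂ} (hz : -z ∈ slitPlane) : ∃ w : ℂ, w ^ 2 = z ∧ 0 < w.im := by
  obtain ⟨w, rfl⟩ := IsAlgClosed.exists_pow_nat_eq z two_pos
  have him : w.im ≠ 0 := by
    intro h
    simp only [mem_slitPlane_iff, sq, neg_re, neg_im, mul_re, mul_im, h] at hz
    rcases hz with hre | him
    · nlinarith
    · simp at him
  rcases lt_or_gt_of_ne him with hneg | hpos
  · exact ⟨-w, neg_sq w, by simpa only [neg_im, neg_pos] using hneg⟩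
  · exact ⟨w, rfl, hpos⟩

lemma ofReal_sub_sq_mem_slitPlane {k : ℂ} (hk : 0 < k.im) {t : ℝ} (ht : 0 ≤ t) :
    (t : ℂ) - k ^ 2 ∈ slitPlane := by
  rw [mem_slitPlane_iff]
  by_cases hre : k.re = 0
  · left
    simp only [sq, sub_re, ofReal_re, mul_re, hre]
    nlinarith
  · right
    simp only [sq, sub_im, ofReal_im, mul_im]
    intro h
    have : k.re * k.im = 0 := by linarith
    simp_all [hk.ne']

lemma lt_normSq_add_of_sq_eq_sq_sub {k w : ℂ} (hk : 0 < k.im) (hw : 0 < w.im) {t : ℝ}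
    (h : w ^ 2 = k ^ 2 - t) : t < normSq (k + w) := by
  have hsum : 0 < (k + w).im := by simpa only [add_im] using add_pos hk hw
  -- multiply `(k + w) * (k - w) = t` by `conj (k + w)` and compare imaginary parts
  have him : normSq (k + w) * (k - w).im = -(t * (k + w).im) := by
    have hmul : (normSq (k + w) : ℂ) * (k - w) = t * (starRingEnd ℂ) (k + w) := by
      rw [normSq_eq_conj_mul_self]
      linear_combination -(starRingEnd ℂ) (k + w) * h
    simpa only [im_ofReal_mul, conj_im, mul_neg] using congrArg im hmul
  have hpos : 0 < normSq (k + w) := normSq_pos.mpr fun h0 ↦ by simp [h0] at hsum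
  have hfactor : (normSq (k + w) - t) * (k + w).im = normSq (k + w) * (2 * k.im) := by
    simp only [sub_im, add_im] at him ⊢
    linear_combination -him
  have : 0 < (normSq (k + w) - t) * (k + w).im := by rw [hfactor]; positivity
  exact sub_pos.mp (pos_of_mul_pos_left this hsum.le)

end SquareRoot

section AngularIntegral

lemma one_sub_mul_ne_zero_of_norm_lt_one {a z : ℂ} (ha : ‖a‖ < 1) (hz : ‖z‖ ≤ 1) :
    1 - a * z ≠ 0 := by
  have hlt : ‖a * z‖ < 1 := by
    rw [norm_mul]
    exact (mul_le_of_le_one_right (norm_nonneg a) hz).trans_lt ha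
  exact sub_ne_zero.mpr fun h ↦ by simp [← h] at hlt

lemma circleAverage_inv_mul_inv {a b : ℂ} (ha : ‖a‖ < 1) (hb : ‖b‖ < 1) :
    circleAverage (fun z ↦ (1 - a * z)⁻¹ * (1 - b * z⁻¹)⁻¹) 0 1 = (1 - a * b)⁻¹ := by
  have hne {z : ℂ} (hz : ‖z‖ ≤ 1) := one_sub_mul_ne_zero_of_norm_lt_one ha hz
  have hdiff : DifferentiableOn ℂ (fun z ↦ (1 - a * z)⁻¹) (Metric.closedBall 0 1) :=
    DifferentiableOn.inv (by fun_prop) fun z hz ↦ hne (by simpa using hz)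
  have hcauchy := DiffContOnCl.circleAverage_smul_div (c := 0) (R := 1) (w := b)
    (by simpa using hdiff.diffContOnCl_ball subset_rfl) (by simpa using hb)
  rw [← hcauchy]
  refine circleAverage_congr_sphere fun z hz ↦ ?_
  have hz0 : z ≠ 0 := by rintro rfl; simp at hz
  simp only [sub_zero, smul_eq_mul]
  rw [mul_comm, ← one_div_div (z - b), sub_div, div_self hz0, one_div, div_eq_mul_inv b]

lemma sub_inner_eq_mul_mul {k w ζ u : ℂ} (hkw : k + w ≠ 0) (hw : w ^ 2 = k ^ 2 - normSq ζ)
    (hu : ‖u‖ = 1) :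
    k - (inner ℝ u ζ : ℝ) =
      (k + w) / 2 * ((1 - starRingEnd ℂ ζ / (k + w) * u) * (1 - ζ / (k + w) * u⁻¹)) := by
  have hu0 : u ≠ 0 := by rintro rfl; simp at hu
  have hinner : ((inner ℝ u ζ : ℝ) : ℂ) = (starRingEnd ℂ ζ * u + ζ * u⁻¹) / 2 := by
    rw [Complex.inner, re_eq_add_conj, map_mul, conj_conj, ← inv_eq_conj hu]
    ring
  rw [normSq_eq_conj_mul_self] at hw
  rw [hinner]
  field_simp
  linear_combination -u * hw

lemma circleAverage_inv_sub_inner {k w ζ : ℂ} (hk : 0 < k.im) (hw : 0 < w.im)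
    (h : w ^ 2 = k ^ 2 - normSq ζ) :
    circleAverage (fun u ↦ (k - (inner ℝ u ζ : ℝ))⁻¹) 0 1 = w⁻¹ := by
  have hlt : ‖ζ‖ < ‖k + w‖ := by
    have := lt_normSq_add_of_sq_eq_sq_sub hk hw h
    simpa only [normSq_eq_norm_sq, sq_lt_sq₀ (norm_nonneg _) (norm_nonneg _)] using this
  have hpos := (norm_nonneg ζ).trans_lt hlt
  have hkw : k + w ≠ 0 := norm_pos_iff.mp hpos
  have hw0 : w ≠ 0 := by rintro rfl; simp at hw
  calc circleAverage (fun u ↦ (k - (inner ℝ u ζ : ℝ))⁻¹) 0 1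
    _ = circleAverage (fun u ↦ ((k + w) / 2)⁻¹ • ((1 - starRingEnd ℂ ζ / (k + w) * u)⁻¹ *
          (1 - ζ / (k + w) * u⁻¹)⁻¹)) 0 1 := by
      refine circleAverage_congr_sphere fun u hu ↦ ?_
      simp only [smul_eq_mul]
      rw [sub_inner_eq_mul_mul hkw h (by simpa using hu), mul_inv, mul_inv]
    _ = ((k + w) / 2)⁻¹ * (1 - starRingEnd ℂ ζ / (k + w) * (ζ / (k + w)))⁻¹ := by
      rw [Real.circleAverage_fun_smul, circleAverage_inv_mul_inv, smul_eq_mul]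
      · rwa [norm_div, RCLike.norm_conj, div_lt_one hpos]
      · rwa [norm_div, div_lt_one hpos]
    _ = w⁻¹ := by
      rw [← mul_inv]
      congr 1
      rw [normSq_eq_conj_mul_self] at h
      field_simp
      linear_combination -h

end AngularIntegral

section PolarCoordinates

variable {F : Type*} [NormedAddCommGroup F] [NormedSpace ℝ F] {f : ℂ → F}

lemma integrableOn_smul_comp_polarCoord_symm (hf : Integrable f) :
    IntegrableOn (fun p : ℝ × ℝ ↦ p.1 • f (Complex.polarCoord.symm p)) polarCoord.target := by
  have hcart : Integrable (f ∘ measurableEquivRealProd.symm) :=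
    (volume_preserving_equiv_real_prod.symm.integrable_comp_emb
      measurableEquivRealProd.symm.measurableEmbedding).mpr hf
  have hpolar := (integrableOn_image_iff_integrableOn_abs_det_fderiv_smul volume
    polarCoord.open_target.measurableSet
    (fun p _ ↦ (hasFDerivAt_polarCoord_symm p).hasFDerivWithinAt)
    polarCoord.symm.injOn _).mp hcart.integrableOn
  refine hpolar.congr_fun (fun p hp ↦ ?_) polarCoord.open_target.measurableSet
  simp only [det_fderivPolarCoordSymm, abs_of_pos (show 0 < p.1 from hp.1), Function.comp_apply,
    measurableEquivRealProd_symm_polarCoord_symm_apply]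

theorem integral_eq_smul_circleAverage (hf : Integrable f) :
    ∫ z, f z = (2 * π) • circleAverage (fun u ↦ ∫ r in Set.Ioi (0 : ℝ), r • f (r • u)) 0 1 := by
  have hint : Integrable (fun p : ℝ × ℝ ↦ p.1 • f (Complex.polarCoord.symm p))
      ((volume.restrict (Set.Ioi 0)).prod (volume.restrict (Set.Ioo (-π) π))) := by
    rw [Measure.prod_restrict]
    exact integrableOn_smul_comp_polarCoord_symm hf
  have hsymm (r θ : ℝ) : Complex.polarCoord.symm (r, θ) = r • circleMap 0 1 θ := by
    simp [circleMap, exp_mul_I, mul_add]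
  calc ∫ z, f z
    _ = ∫ p in Set.Ioi 0 ×ˢ Set.Ioo (-π) π, p.1 • f (Complex.polarCoord.symm p) :=
      (Complex.integral_comp_polarCoord_symm f).symm
    _ = ∫ θ in Set.Ioo (-π) π, ∫ r in Set.Ioi (0 : ℝ), r • f (r • circleMap 0 1 θ) := by
      rw [Measure.volume_eq_prod, ← Measure.prod_restrict, integral_prod_symm _ hint]
      simp only [hsymm]
    _ = ∫ θ in (-π)..π, ∫ r in Set.Ioi (0 : ℝ), r • f (r • circleMap 0 1 θ) := by
      rw [intervalIntegral.integral_of_le (by linarith [Real.pi_pos]), integral_Ioc_eq_integral_Ioo]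
    _ = _ := by
      rw [Real.circleAverage_eq_integral_add (-π), smul_inv_smul₀ (by positivity),
        intervalIntegral.integral_comp_add_right
          (fun θ ↦ ∫ r in Set.Ioi (0 : ℝ), r • f (r • circleMap 0 1 θ))]
      congr 1 <;> ring

end PolarCoordinates

section HelmholtzKernel

/-- The outgoing Helmholtz Green's function `e^{ik|x|}/(4π|x|)` of `ℝ³`, as a radial function on
an arbitrary normed space; at the origin its value is the junk value `0`. -/
def helmholtzGreen {E : Type*} [Norm E] (k : ℂ) (x : E) : ℂ :=
  exp (I * k * ‖x‖) / (4 * π * ‖x‖)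

lemma norm_helmholtzGreen {E : Type*} [SeminormedAddCommGroup E] (k : ℂ) (x : E) :
    ‖helmholtzGreen k x‖ = Real.exp (-k.im * ‖x‖) / (4 * π * ‖x‖) := by
  simp [helmholtzGreen, norm_exp, abs_of_pos Real.pi_pos]

lemma integrable_helmholtzGreen {E : Type*} [NormedAddCommGroup E] [NormedSpace ℝ E]
    [MeasurableSpace E] [BorelSpace E] [FiniteDimensional ℝ E] (μ : Measure E) [μ.IsAddHaarMeasure]
    (hE : 2 ≤ Module.finrank ℝ E) {k : ℂ} (hk : 0 < k.im) :
    Integrable (fun x : E ↦ helmholtzGreen k x) μ := by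
  have : Nontrivial E := Module.nontrivial_of_finrank_pos (R := ℝ) (by lia)
  have hmeas : AEStronglyMeasurable (fun x : E ↦ helmholtzGreen k x) μ := by
    unfold helmholtzGreen
    exact Measurable.aestronglyMeasurable (by fun_prop)
  rw [← integrable_norm_iff hmeas]
  simp only [norm_helmholtzGreen]
  rw [integrable_fun_norm_addHaar μ (f := fun r ↦ Real.exp (-k.im * r) / (4 * π * r))]
  obtain ⟨n, hn⟩ := Nat.exists_eq_add_of_le' hE
  have hradial : IntegrableOn (fun r : ℝ ↦ r ^ (n : ℝ) * Real.exp (-k.im * r ^ (1 : ℝ)) / (4 * π))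
      (Set.Ioi 0) :=
    (integrableOn_rpow_mul_exp_neg_mul_rpow (by linarith [n.cast_nonneg (α := ℝ)])
      one_pos hk).div_const _
  refine hradial.congr_fun (fun r hr ↦ ?_) measurableSet_Ioi
  have hr0 : r ≠ 0 := (Set.mem_Ioi.mp hr).ne'
  simp only [hn, Nat.add_succ_sub_one, Real.rpow_natCast, Real.rpow_one, smul_eq_mul, pow_succ]
  field_simp

variable {E : Type*} [NormedAddCommGroup E] [InnerProductSpace ℝ E]

lemma integral_exp_I_mul_Ioi {a : ℂ} (ha : 0 < a.im) :
    ∫ r : ℝ in Set.Ioi 0, exp (I * a * r) = I * a⁻¹ := by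
  rw [integral_exp_mul_complex_Ioi (by simpa using ha)]
  simp only [ofReal_zero, mul_zero, exp_zero]
  rw [neg_div, one_div, mul_inv, inv_I, neg_mul, neg_neg]

lemma integral_ray_fourier_helmholtzGreen {k : ℂ} (hk : 0 < k.im) {u : E} (hu : ‖u‖ = 1) (ξ : E) :
    ∫ r in Set.Ioi (0 : ℝ),
        r • (exp (-I * (inner ℝ (r • u) ξ : ℝ)) * helmholtzGreen k (r • u)) =
      I / (4 * π) * (k - (inner ℝ u ξ : ℝ))⁻¹ := by
  calc _ = ∫ r : ℝ in Set.Ioi 0, (4 * π : ℂ)⁻¹ * exp (I * (k - (inner ℝ u ξ : ℝ)) * r) := by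
        refine setIntegral_congr_fun measurableSet_Ioi fun r hr ↦ ?_
        have hr0 : (r : ℂ) ≠ 0 := ofReal_ne_zero.mpr (Set.mem_Ioi.mp hr).ne'
        have hnorm : ‖r • u‖ = r := by rw [norm_smul, hu, mul_one, Real.norm_of_nonneg hr.le]
        have hexp : exp (I * (k - (inner ℝ u ξ : ℝ)) * r) =
            exp (-I * (r * inner ℝ u ξ : ℝ)) * exp (I * k * r) := by
          rw [← exp_add]; push_cast; ring_nf
        simp only [helmholtzGreen, hnorm, real_inner_smul_left, real_smul, hexp]
        field_simp
    _ = I / (4 * π) * (k - (inner ℝ u ξ : ℝ))⁻¹ := by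
        rw [integral_const_mul, integral_exp_I_mul_Ioi (by simpa using hk)]
        ring

variable [MeasurableSpace E] [BorelSpace E] [FiniteDimensional ℝ E]

lemma integrable_fourier_helmholtzGreen (hE : 2 ≤ Module.finrank ℝ E) {k : ℂ} (hk : 0 < k.im)
    (ξ : E) : Integrable fun x : E ↦ exp (-I * (inner ℝ x ξ : ℝ)) * helmholtzGreen k x := by
  refine (integrable_helmholtzGreen volume hE hk).bdd_mul (c := 1)
    (Continuous.aestronglyMeasurable (by fun_prop)) (.of_forall fun x ↦ ?_)
  simp [norm_exp]

lemma integral_complex_fourier_helmholtzGreen {k w ζ : ℂ} (hk : 0 < k.im) (hw : 0 < w.im)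
    (h : w ^ 2 = k ^ 2 - normSq ζ) :
    ∫ z : ℂ, exp (-I * (inner ℝ z ζ : ℝ)) * helmholtzGreen k z = I / (2 * w) := by
  calc ∫ z : ℂ, exp (-I * (inner ℝ z ζ : ℝ)) * helmholtzGreen k z
    _ = (2 * π) • circleAverage
          (fun u ↦ (I / (4 * π)) • (k - (inner ℝ u ζ : ℝ))⁻¹) 0 1 := by
      rw [integral_eq_smul_circleAverage
        (integrable_fourier_helmholtzGreen finrank_real_complex.ge hk ζ)]
      congr 1
      refine circleAverage_congr_sphere fun u hu ↦ ?_
      exact integral_ray_fourier_helmholtzGreen hk (by simpa using hu) ζ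
    _ = (2 * π) • (I / (4 * π) * w⁻¹) := by
      rw [Real.circleAverage_fun_smul, circleAverage_inv_sub_inner hk hw h, smul_eq_mul]
    _ = I / (2 * w) := by
      have hπ : (π : ℂ) ≠ 0 := ofReal_ne_zero.mpr Real.pi_ne_zero
      rw [real_smul]
      push_cast
      field_simp
      norm_num

theorem integral_fourier_helmholtzGreen (hE : Module.finrank ℝ E = 2) {k w : ℂ} (hk : 0 < k.im)
    (hw : 0 < w.im) {ξ : E} (h : w ^ 2 = k ^ 2 - ((‖ξ‖ ^ 2 : ℝ) : ℂ)) :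
    ∫ x : E, exp (-I * (inner ℝ x ξ : ℝ)) * helmholtzGreen k x = I / (2 * w) := by
  let e : ℂ ≃ₗᵢ[ℝ] E :=
    isometryOfOrthonormal ((stdOrthonormalBasis ℝ E).reindex (finCongr hE))
  have hnorm : ‖ξ‖ = ‖e.symm ξ‖ := (e.symm.norm_map ξ).symm
  rw [← e.measurePreserving.integral_comp e.toHomeomorph.measurableEmbedding,
    ← integral_complex_fourier_helmholtzGreen (ζ := e.symm ξ) hk hw
      (by rwa [normSq_eq_norm_sq, ← hnorm])]
  congr 1 with z
  have hinner : inner ℝ (e z) ξ = inner ℝ z (e.symm ξ) := by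
    rw [← e.inner_map_map z, e.apply_symm_apply]
  rw [hinner, helmholtzGreen, helmholtzGreen, e.norm_map]

theorem statement12_general (hE : Module.finrank ℝ E = 2) {k : ℂ} (hk : 0 < k.im) (ξ : E) :
    Integrable (fun x : E ↦ exp (-I * (inner ℝ x ξ : ℝ)) * helmholtzGreen k x) ∧
    ∃ w : ℂ, w ^ 2 = k ^ 2 - ((‖ξ‖ ^ 2 : ℝ) : ℂ) ∧ 0 < w.im ∧
      ∫ x : E, exp (-I * (inner ℝ x ξ : ℝ)) * helmholtzGreen k x = I / (2 * w) := by
  have hslit : -(k ^ 2 - ((‖ξ‖ ^ 2 : ℝ) : ℂ)) ∈ slitPlane := by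
    rw [neg_sub]
    exact ofReal_sub_sq_mem_slitPlane hk (sq_nonneg _)
  obtain ⟨w, hw, him⟩ := exists_sq_eq_im_pos hslit
  exact ⟨integrable_fourier_helmholtzGreen hE.ge hk ξ, w, hw, him,
    integral_fourier_helmholtzGreen hE hk him hw⟩

end HelmholtzKernel

lemma rdot_eq_inner (x ξ : R2) : rdot x ξ = inner ℝ x ξ := by
  simp [rdot, PiLp.inner_apply, Fin.sum_univ_two, mul_comm]

/-- for `k ∈ ℂ` with `Im k > 0` and any `ξ ∈ ℝ²`, the planar Fourier
transform of `e^{ik|x|}/(4π|x|)` converges absolutely and equals `i/(2√(k²-|ξ|²))`,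
where `√(k²-|ξ|²)` is the square root with positive imaginary part. -/
theorem statement12 (k : ℂ) (hk : 0 < k.im) (ξ : R2) :
    Integrable (fun x : R2 => Complex.exp (-Complex.I * (rdot x ξ : ℂ)) *
      (Complex.exp (Complex.I * k * (‖x‖ : ℂ)) / (4 * (Real.pi : ℂ) * (‖x‖ : ℂ)))) volume ∧
    ∃ w : ℂ, w ^ 2 = k ^ 2 - ((‖ξ‖ ^ 2 : ℝ) : ℂ) ∧ 0 < w.im ∧
      (∫ x : R2, Complex.exp (-Complex.I * (rdot x ξ : ℂ)) *
        (Complex.exp (Complex.I * k * (‖x‖ : ℂ)) / (4 * (Real.pi : ℂ) * (‖x‖ : ℂ)))) =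
        Complex.I / (2 * w) := by
  simpa only [rdot_eq_inner, helmholtzGreen] using
    statement12_general finrank_euclideanSpace_fin hk ξ

end
end
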